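/- Under Assumption 1, let t₀ ∈ [0,1], x₀, w₀ ∈ ℝⁿ, d₀ := ‖x₀ − w₀‖, let 𝐯 ∈ 𝒱 be a control, let u* ∈ U attain the max in H⁻(t₀, x₀, x₀ − w₀), and set 𝐰(t) := x[t₀, w₀, u*, 𝐯](t). Then for all s ∈ [t₀,1] and all v ∈ V: ⟨x₀ − w₀, f(s, 𝐰(s), u*, v)⟩ ≥ H⁻(t₀, x₀, x₀ − w₀) − C(s)·d₀ − c·d₀², where C(s) := c(1 + ‖f‖)(s − t₀). -/

import Mathlib

open Set MeasureTheory Metric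

noncomputable section

/-- `Evec n` is the euclidean space `ℝⁿ`. -/
abbrev Evec (n : ℕ) : Type := EuclideanSpace ℝ (Fin n)

/-- A (measurable) control with values in the set `K`. -/
def IsControl {d : ℕ} (K : Set (Evec d)) (u : ℝ → Evec d) : Prop :=
  Measurable u ∧ ∀ t, u t ∈ K

/-- Assumption 1: `U`, `V` are nonempty compact sets, `f` is bounded (in norm) by `Mf`
on `[0,1] × ℝⁿ × U × V`, and `f` is `c`-Lipschitz in `(t,x)`, uniformly in `(u,v)`. -/
structure Assumption1 {n p q : ℕ} (f : ℝ → Evec n → Evec p → Evec q → Evec n)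
    (U : Set (Evec p)) (V : Set (Evec q)) (Mf c : ℝ) : Prop where
  compactU : IsCompact U
  nonemptyU : U.Nonempty
  compactV : IsCompact V
  nonemptyV : V.Nonempty
  Mf_nonneg : 0 ≤ Mf
  c_nonneg : 0 ≤ c
  bounded : ∀ t ∈ Icc (0:ℝ) 1, ∀ (x : Evec n), ∀ u ∈ U, ∀ v ∈ V, ‖f t x u v‖ ≤ Mf
  lipschitz : ∀ s ∈ Icc (0:ℝ) 1, ∀ t ∈ Icc (0:ℝ) 1, ∀ (x y : Evec n), ∀ u ∈ U, ∀ v ∈ V,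
      ‖f t x u v - f s y u v‖ ≤ c * (|t - s| + ‖x - y‖)

/-- `sol` is a solution operator for the dynamics `ż(t) = f(t,z(t),u(t),v(t))`:
for any initial time `t₀ ∈ [0,1]`, initial state `z₀` and controls `(u,v)`,
`sol t₀ z₀ u v` solves the corresponding integral equation on `[t₀,1]`. -/
def IsSolOp {n p q : ℕ} (f : ℝ → Evec n → Evec p → Evec q → Evec n)
    (U : Set (Evec p)) (V : Set (Evec q))
    (sol : ℝ → Evec n → (ℝ → Evec p) → (ℝ → Evec q) → ℝ → Evec n) : Prop :=
  ∀ t₀ ∈ Icc (0:ℝ) 1, ∀ (z₀ : Evec n) (u : ℝ → Evec p) (v : ℝ → Evec q),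
    IsControl U u → IsControl V v →
      sol t₀ z₀ u v t₀ = z₀ ∧
      ∀ t ∈ Icc t₀ 1,
        sol t₀ z₀ u v t = z₀ + ∫ s in t₀..t, f s (sol t₀ z₀ u v s) (u s) (v s)

/-- The maxmin `H⁻(t,x,ξ) = sup_{u ∈ U} inf_{v ∈ V} ⟨ξ, f(t,x,u,v)⟩` of the local game. -/
def Hm {n p q : ℕ} (f : ℝ → Evec n → Evec p → Evec q → Evec n)
    (U : Set (Evec p)) (V : Set (Evec q)) (t : ℝ) (x ξ : Evec n) : ℝ :=
  ⨆ u : U, ⨅ v : V, (inner ℝ ξ (f t x (↑u) (↑v)) : ℝ)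

/-- The minmax `H⁺(t,x,ξ) = inf_{v ∈ V} sup_{u ∈ U} ⟨ξ, f(t,x,u,v)⟩` of the local game. -/
def Hp {n p q : ℕ} (f : ℝ → Evec n → Evec p → Evec q → Evec n)
    (U : Set (Evec p)) (V : Set (Evec q)) (t : ℝ) (x ξ : Evec n) : ℝ :=
  ⨅ v : V, ⨆ u : U, (inner ℝ ξ (f t x (↑u) (↑v)) : ℝ)

/-- `ustar` is an optimal action of player 1 in the local game `Γ(t,x,ξ)`:
it attains the max in `H⁻(t,x,ξ)`. -/
def OptimalU {n p q : ℕ} (f : ℝ → Evec n → Evec p → Evec q → Evec n)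
    (U : Set (Evec p)) (V : Set (Evec q)) (t : ℝ) (x ξ : Evec n) (ustar : Evec p) : Prop :=
  ustar ∈ U ∧ (⨅ v : V, (inner ℝ ξ (f t x ustar (↑v)) : ℝ)) = Hm f U V t x ξ

/-- `vstar` is an optimal action of player 2 in the local game `Γ(t,x,ξ)`:
it attains the min in `H⁺(t,x,ξ)`. -/
def OptimalV {n p q : ℕ} (f : ℝ → Evec n → Evec p → Evec q → Evec n)
    (U : Set (Evec p)) (V : Set (Evec q)) (t : ℝ) (x ξ : Evec n) (vstar : Evec q) : Prop :=
  vstar ∈ V ∧ (⨆ u : U, (inner ℝ ξ (f t x (↑u) vstar) : ℝ)) = Hp f U V t x ξ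

/-- Assumption 2 (Isaacs' condition): every local game has a value. -/
def Isaacs {n p q : ℕ} (f : ℝ → Evec n → Evec p → Evec q → Evec n)
    (U : Set (Evec p)) (V : Set (Evec q)) : Prop :=
  ∀ t ∈ Icc (0:ℝ) 1, ∀ x ξ : Evec n, Hm f U V t x ξ = Hp f U V t x ξ

/-- The time-`t` section `𝒲(t)` of a set `𝒲 ⊆ ℝ × ℝⁿ`. -/
def sec {n : ℕ} (W : Set (ℝ × Evec n)) (t : ℝ) : Set (Evec n) := {x | (t, x) ∈ W}

/-- Property P1: every section `𝒲(t)`, `t ∈ [t₀,1]`, is closed and nonempty. -/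
def PropP1 {n : ℕ} (t₀ : ℝ) (W : Set (ℝ × Evec n)) : Prop :=
  ∀ t ∈ Icc t₀ 1, IsClosed (sec W t) ∧ (sec W t).Nonempty

/-- Property P2: for every `(t,x) ∈ 𝒲` and `t' ∈ [t,1]`,
`sup_{u ∈ U} inf_{𝐯 ∈ 𝒱} D(x[t,x,u,𝐯](t'), 𝒲(t')) = 0` (stated using that the
distance is nonnegative: every player-1 constant control `u` admits ε-good replies). -/
def PropP2 {n p q : ℕ} (U : Set (Evec p)) (V : Set (Evec q))
    (sol : ℝ → Evec n → (ℝ → Evec p) → (ℝ → Evec q) → ℝ → Evec n)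
    (W : Set (ℝ × Evec n)) : Prop :=
  ∀ t x, (t, x) ∈ W → ∀ t' ∈ Icc t 1, ∀ u ∈ U, ∀ ε > 0,
    ∃ vc : ℝ → Evec q, IsControl V vc ∧
      infDist (sol t x (fun _ => u) vc t') (sec W t') < ε

/-!
With `ξ = x₀ - w₀` and the action of player 1 fixed, `v ↦ ⟨ξ, f(t₀, x₀, u, v)⟩` is bounded below by
its infimum, which is `H⁻(t₀, x₀, ξ)` for an optimal action. Moving from `(t₀, x₀)` to `(s, 𝐰(s))`
changes `f` by at most `c ((s - t₀) + ‖x₀ - 𝐰(s)‖)`, and `𝐰` has speed at most `‖f‖`, so that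
`‖x₀ - 𝐰(s)‖ ≤ ‖ξ‖ + ‖f‖ (s - t₀)`. Cauchy–Schwarz against `ξ` turns this into the claimed loss.
-/

section GeneralBounds

variable {E : Type*} [NormedAddCommGroup E]

theorem norm_sub_le_of_eq_add_integral [NormedSpace ℝ E] {a b M : ℝ} (hab : a ≤ b) {x y : E}
    {φ : ℝ → E} (hy : y = x + ∫ r in a..b, φ r) (hφ : ∀ r ∈ Ioc a b, ‖φ r‖ ≤ M) :
    ‖y - x‖ ≤ M * (b - a) := by
  rw [hy, add_sub_cancel_left, ← abs_of_nonneg (sub_nonneg.2 hab)]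
  exact intervalIntegral.norm_integral_le_of_norm_le_const (by rwa [uIoc_of_le hab])

variable [InnerProductSpace ℝ E]

theorem inner_sub_norm_mul_norm_sub_le_inner (ξ a b : E) :
    inner ℝ ξ a - ‖ξ‖ * ‖a - b‖ ≤ inner ℝ ξ b := by
  have h := real_inner_le_norm ξ (a - b)
  rw [inner_sub_right] at h
  linarith

theorem bddBelow_range_inner_of_norm_le {ι : Type*} {g : ι → E} {M : ℝ} (hg : ∀ i, ‖g i‖ ≤ M)
    (ξ : E) : BddBelow (range fun i => inner ℝ ξ (g i)) := by
  refine ⟨-(‖ξ‖ * M), forall_mem_range.2 fun i => neg_le_of_abs_le ?_⟩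
  calc |inner ℝ ξ (g i)| ≤ ‖ξ‖ * ‖g i‖ := abs_real_inner_le_norm ξ (g i)
    _ ≤ ‖ξ‖ * M := by gcongr; exact hg i

/-- Here `g t x v` stands for `f(t, x, u, v)` with the action `u` of player 1 fixed. -/
theorem statement3_general {B : Type*} (g : ℝ → E → B → E) {M c t₀ t₁ : ℝ} (hc : 0 ≤ c)
    (x₀ w₀ : E) (w : ℝ → E)
    (hlip : ∀ s ∈ Icc t₀ t₁, ∀ y v, ‖g t₀ x₀ v - g s y v‖ ≤ c * (|t₀ - s| + ‖x₀ - y‖))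
    (hbdd : BddBelow (range fun v => inner ℝ (x₀ - w₀) (g t₀ x₀ v)))
    (hw : ∀ s ∈ Icc t₀ t₁, ‖w s - w₀‖ ≤ M * (s - t₀)) :
    ∀ s ∈ Icc t₀ t₁, ∀ v,
      (⨅ v', inner ℝ (x₀ - w₀) (g t₀ x₀ v')) - (c * (1 + M) * (s - t₀)) * ‖x₀ - w₀‖ -
          c * ‖x₀ - w₀‖ ^ 2 ≤
        inner ℝ (x₀ - w₀) (g s (w s) v) := by
  intro s hs v
  have htime : |t₀ - s| = s - t₀ := by
    rw [abs_sub_comm, abs_of_nonneg (sub_nonneg.2 hs.1)]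
  have hspace : ‖x₀ - w s‖ ≤ ‖x₀ - w₀‖ + M * (s - t₀) :=
    (norm_sub_le_norm_sub_add_norm_sub x₀ w₀ (w s)).trans <| by
      rw [norm_sub_rev w₀]
      gcongr
      exact hw s hs
  have hg : ‖g t₀ x₀ v - g s (w s) v‖ ≤ c * ((s - t₀) + (‖x₀ - w₀‖ + M * (s - t₀))) :=
    (hlip s hs (w s) v).trans <| by
      rw [htime]
      gcongr
  calc (⨅ v', inner ℝ (x₀ - w₀) (g t₀ x₀ v')) - (c * (1 + M) * (s - t₀)) * ‖x₀ - w₀‖ -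
          c * ‖x₀ - w₀‖ ^ 2
      = (⨅ v', inner ℝ (x₀ - w₀) (g t₀ x₀ v')) -
          ‖x₀ - w₀‖ * (c * ((s - t₀) + (‖x₀ - w₀‖ + M * (s - t₀)))) := by ring
    _ ≤ inner ℝ (x₀ - w₀) (g t₀ x₀ v) - ‖x₀ - w₀‖ * ‖g t₀ x₀ v - g s (w s) v‖ := by
        gcongr
        exact ciInf_le hbdd v
    _ ≤ inner ℝ (x₀ - w₀) (g s (w s) v) := inner_sub_norm_mul_norm_sub_le_inner ..

end GeneralBounds

theorem IsSolOp.norm_sub_le {n p q : ℕ} {f : ℝ → Evec n → Evec p → Evec q → Evec n}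
    {U : Set (Evec p)} {V : Set (Evec q)}
    {sol : ℝ → Evec n → (ℝ → Evec p) → (ℝ → Evec q) → ℝ → Evec n} (hsol : IsSolOp f U V sol)
    {M : ℝ} (hf : ∀ t ∈ Icc (0 : ℝ) 1, ∀ x, ∀ u ∈ U, ∀ v ∈ V, ‖f t x u v‖ ≤ M)
    {t₀ : ℝ} (ht₀ : t₀ ∈ Icc (0 : ℝ) 1) (z₀ : Evec n)
    {u : ℝ → Evec p} (hu : IsControl U u) {v : ℝ → Evec q} (hv : IsControl V v) :
    ∀ s ∈ Icc t₀ 1, ‖sol t₀ z₀ u v s - z₀‖ ≤ M * (s - t₀) := fun s hs =>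
  norm_sub_le_of_eq_add_integral hs.1 ((hsol t₀ ht₀ z₀ u v hu hv).2 s hs) fun r hr =>
    hf r ⟨ht₀.1.trans hr.1.le, hr.2.trans hs.2⟩ _ _ (hu.2 r) _ (hv.2 r)

theorem isControl_const {d : ℕ} {K : Set (Evec d)} {k : Evec d} (hk : k ∈ K) :
    IsControl K fun _ => k :=
  ⟨measurable_const, fun _ => hk⟩

/-- if `u*` attains the max in `H⁻(t₀,x₀,x₀-w₀)` and
`𝐰(t) = x[t₀,w₀,u*,𝐯](t)`, then for all `s ∈ [t₀,1]` and `v ∈ V`,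
`⟨x₀-w₀, f(s,𝐰(s),u*,v)⟩ ≥ H⁻(t₀,x₀,x₀-w₀) - C(s)·d₀ - c·d₀²`
with `C(s) = c(1+‖f‖)(s-t₀)` and `d₀ = ‖x₀-w₀‖`. -/
theorem statement3 {n p q : ℕ}
    (f : ℝ → Evec n → Evec p → Evec q → Evec n)
    (U : Set (Evec p)) (V : Set (Evec q)) (Mf c : ℝ)
    (hA1 : Assumption1 f U V Mf c)
    (sol : ℝ → Evec n → (ℝ → Evec p) → (ℝ → Evec q) → ℝ → Evec n)
    (hsol : IsSolOp f U V sol)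
    (t₀ : ℝ) (ht₀ : t₀ ∈ Icc (0:ℝ) 1)
    (x₀ w₀ : Evec n)
    (vc : ℝ → Evec q) (hvc : IsControl V vc)
    (ustar : Evec p)
    (hustar : OptimalU f U V t₀ x₀ (x₀ - w₀) ustar) :
    ∀ s ∈ Icc t₀ 1, ∀ v ∈ V,
      Hm f U V t₀ x₀ (x₀ - w₀) - (c * (1 + Mf) * (s - t₀)) * ‖x₀ - w₀‖ -
          c * ‖x₀ - w₀‖ ^ 2 ≤
        (inner ℝ (x₀ - w₀) (f s (sol t₀ w₀ (fun _ => ustar) vc s) ustar v) : ℝ) := by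
  obtain ⟨hu, hmax⟩ := hustar
  have hspeed := hsol.norm_sub_le hA1.bounded ht₀ w₀ (isControl_const hu) hvc
  have hbdd := bddBelow_range_inner_of_norm_le (g := fun v : V => f t₀ x₀ ustar v)
    (fun v => hA1.bounded t₀ ht₀ x₀ ustar hu v v.2) (x₀ - w₀)
  have hlip : ∀ s ∈ Icc t₀ 1, ∀ y (v : V),
      ‖f t₀ x₀ ustar v - f s y ustar v‖ ≤ c * (|t₀ - s| + ‖x₀ - y‖) := fun s hs y v =>
    hA1.lipschitz s ⟨ht₀.1.trans hs.1, hs.2⟩ t₀ ht₀ x₀ y ustar hu v v.2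
  intro s hs v hv
  rw [← hmax]
  exact statement3_general (fun t x (v : V) => f t x ustar v) hA1.c_nonneg x₀ w₀ _ hlip hbdd
    hspeed s hs ⟨v, hv⟩
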